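/- arXiv:2603.15578 — 2 statements merged into one kernel-verified Lean document; each statement's English description precedes it below -/
import Mathlib

section
/- Let W:[0,1]²→[0,1] be a graphon whose normalized degree function g is strictly increasing and satisfies L₁|x−y| ≤ |g(x)−g(y)| for all x,y∈[0,1] and some L₁>0. Consider a sequence of collections of graphs sampled from W in which the number of graphs M is fixed and there is a network index m* with n^{(m*)} → ∞. Then max_{i∈⟦n^{(m*)}⟧} |Û^{JGS}_{i,(m*)} − U_{i,(m*)}| converges to 0 in probability. -/
open MeasureTheory Set Finset
open scoped Classical

noncomputable section

/-- The uniform distribution on `[0,1]`. -/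
def unif : Measure ℝ := volume.restrict (Set.Icc (0:ℝ) 1)

instance : IsProbabilityMeasure unif := by
  constructor
  simp [unif, Real.volume_Icc]

/-- Index of a node: a graph index `m` together with a node index in graph `m`. -/
abbrev NodeIdx (M : ℕ) (n : Fin M → ℕ) := Σ m : Fin M, Fin (n m)

/-- Index of a (ordered) dyad within one graph of the collection. -/
abbrev DyadIdx (M : ℕ) (n : Fin M → ℕ) := Σ m : Fin M, Fin (n m) × Fin (n m)

/-- Sample space: latent positions for every node, and auxiliary uniform noise
for every dyad (used to generate the Bernoulli edges). -/
abbrev Sample (M : ℕ) (n : Fin M → ℕ) := (NodeIdx M n → ℝ) × (DyadIdx M n → ℝ)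

/-- The law of the collection: latent positions are i.i.d. uniform on `[0,1]`,
independent of the i.i.d. uniform dyad noises. -/
def Pmodel (M : ℕ) (n : Fin M → ℕ) : Measure (Sample M n) :=
  (Measure.pi fun _ => unif).prod (Measure.pi fun _ => unif)

variable {M : ℕ} {n : Fin M → ℕ}

/-- Latent position `U_{i,(m)}` of node `i` of graph `m`. -/
def Upos (m : Fin M) (i : Fin (n m)) (ω : Sample M n) : ℝ := ω.1 ⟨m, i⟩

/-- Adjacency variable `A^{(m)}_{i,j}`: given the latent positions, edges are
independent Bernoulli variables with success probability `W(U_i,U_j)`,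
realized by thresholding the uniform dyad noise; `A_{ii} = 0` and `A` symmetric. -/
def Aedge (W : ℝ → ℝ → ℝ) (m : Fin M) (i j : Fin (n m)) (ω : Sample M n) : ℝ :=
  if i = j then 0
  else if ω.2 ⟨m, (min i j, max i j)⟩ ≤ W (Upos m i ω) (Upos m j ω) then 1 else 0

/-- Normalized empirical degree `d̂_{i,(m)} = (1/(n^{(m)}-1)) ∑_j A^{(m)}_{i,j}`. -/
def dhat (W : ℝ → ℝ → ℝ) (m : Fin M) (i : Fin (n m)) (ω : Sample M n) : ℝ :=
  (∑ j, Aedge W m i j ω) / ((n m : ℝ) - 1)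

/-- Total number of nodes `N = ∑_m n^{(m)}`. -/
def Ntot (M : ℕ) (n : Fin M → ℕ) : ℕ := ∑ m, n m

/-- Normalized degree function `g(u) = ∫₀¹ W(u,v) dv`. -/
def gdeg (W : ℝ → ℝ → ℝ) (u : ℝ) : ℝ := ∫ v in Set.Icc (0:ℝ) 1, W u v

/-- Empirical rank `r̂_{i,(m)}` of node `(i,m)` among all `N` nodes of the
collection sorted by increasing normalized empirical degree. -/
def rhat (W : ℝ → ℝ → ℝ) (m : Fin M) (i : Fin (n m)) (ω : Sample M n) : ℕ :=
  (Finset.univ.filter fun p : NodeIdx M n => dhat W p.1 p.2 ω ≤ dhat W m i ω).card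

/-- JGS latent position estimator `Û^{JGS}_{i,(m)} = r̂_{i,(m)}/N - 1/(2N)`. -/
def Uhat (W : ℝ → ℝ → ℝ) (m : Fin M) (i : Fin (n m)) (ω : Sample M n) : ℝ :=
  (rhat W m i ω : ℝ) / (Ntot M n : ℝ) - 1 / (2 * (Ntot M n : ℝ))


open ProbabilityTheory in
lemma aux_hoeff_one {α ι : Type*} [MeasurableSpace α] [Fintype ι] (ν : Measure α)
    [IsProbabilityMeasure ν] (f : α → ℝ) (hf : Measurable f) (h01 : ∀ x, f x ∈ Set.Icc (-1:ℝ) 1)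
    (η : ℝ) (hη : 0 ≤ η) :
    (Measure.pi fun _ : ι => ν).real
      {x | Fintype.card ι * η ≤ ∑ i, (f (x i) - ∫ a, f a ∂ν)} ≤
      Real.exp (-(Fintype.card ι * η ^ 2 / 2)) := by
  have hind : iIndepFun (fun (i : ι) (x : ι → α) => (fun a => f a - ∫ a, f a ∂ν) (x i))
      (Measure.pi fun _ : ι => ν) :=
    iIndepFun_pi (X := fun _ a => f a - ∫ a, f a ∂ν) (fun i => by fun_prop)
  have hs : ∀ i ∈ (Finset.univ : Finset ι), HasSubgaussianMGF
      (fun (x : ι → α) => (fun a => f a - ∫ a, f a ∂ν) (x i)) 1 (Measure.pi fun _ : ι => ν) := by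
    intro i _
    have h := hasSubgaussianMGF_of_mem_Icc (μ := Measure.pi fun _ : ι => ν)
      (X := fun x => f (x i)) (a := -1) (b := 1)
      (hf.comp (measurable_pi_apply i)).aemeasurable (Filter.Eventually.of_forall fun x => h01 _)
    have hi : ∫ x, f (x i) ∂(Measure.pi fun _ : ι => ν) = ∫ a, f a ∂ν := by
      have := (measurePreserving_eval (fun _ : ι => ν) i)
      have h2 := integral_map (μ := Measure.pi fun _ : ι => ν) (φ := Function.eval i)
        (measurable_pi_apply i).aemeasurable (f := f) hf.aestronglyMeasurable
      rw [this.map_eq] at h2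
      exact h2.symm
    rw [hi] at h
    convert h using 1
    have : ‖(1:ℝ) - -1‖₊ = 2 := by
      ext; simp; norm_num
    rw [this]; simp
  have := HasSubgaussianMGF.measure_sum_ge_le_of_iIndepFun hind hs
    (ε := Fintype.card ι * η) (by positivity)
  refine this.trans (Real.exp_le_exp.2 (le_of_eq ?_))
  rcases Nat.eq_zero_or_pos (Fintype.card ι) with h | h
  · simp [h]
  · simp
    field_simp

lemma aux_hoeff {α ι : Type*} [MeasurableSpace α] [Fintype ι] (ν : Measure α)
    [IsProbabilityMeasure ν] (f : α → ℝ) (hf : Measurable f) (h01 : ∀ x, f x ∈ Set.Icc (0:ℝ) 1)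
    (η : ℝ) (hη : 0 ≤ η) :
    (Measure.pi fun _ : ι => ν)
      {x | Fintype.card ι * η ≤ |∑ i, f (x i) - Fintype.card ι * ∫ a, f a ∂ν|} ≤
      ENNReal.ofReal (2 * Real.exp (-(Fintype.card ι * η ^ 2 / 2))) := by
  have h1 := aux_hoeff_one (ι := ι) ν f hf
    (fun x => ⟨by linarith [(h01 x).1], (h01 x).2⟩) η hη
  have h2 := aux_hoeff_one (ι := ι) ν (fun x => - f x) hf.neg
    (fun x => ⟨by linarith [(h01 x).2], by linarith [(h01 x).1]⟩) η hη
  rw [← ENNReal.ofReal_toReal (measure_ne_top (Measure.pi fun _ : ι => ν) _)]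
  apply ENNReal.ofReal_le_ofReal
  change (Measure.pi fun _ : ι => ν).real _ ≤ _
  refine (measureReal_mono ?_ ?_).trans ((measureReal_union_le _ _).trans
    ((add_le_add h1 h2).trans (by linarith)))
  · intro x hx
    simp only [Set.mem_ofPred_eq, Set.mem_union, Finset.sum_sub_distrib, integral_neg,
      Finset.sum_neg_distrib, Finset.sum_const, Finset.card_univ, nsmul_eq_mul] at hx ⊢
    rcases le_abs.1 hx with h | h
    · left; linarith
    · right; linarith
  · exact measure_ne_top _ _

open ProbabilityTheory in
lemma aux_reindex {α ι κ : Type*} [MeasurableSpace α] [Fintype ι] [Fintype κ] (ν : Measure α)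
    [IsProbabilityMeasure ν] (e : ι → κ) (he : Function.Injective e) :
    MeasurePreserving (fun (x : κ → α) i => x (e i)) (Measure.pi fun _ => ν)
      (Measure.pi fun _ => ν) := by
  refine ⟨by fun_prop, ?_⟩
  have hind : iIndepFun (fun (k : κ) (x : κ → α) => x k) (Measure.pi fun _ => ν) :=
    iIndepFun_pi (X := fun _ a => a) (fun i => by fun_prop)
  have := (iIndepFun_iff_map_fun_eq_pi_map (fun i => (measurable_pi_apply (e i)).aemeasurable)).1 (hind.precomp he)
  rw [this]
  congr 1
  ext1 i
  exact (measurePreserving_eval (fun _ : κ => ν) (e i)).map_eq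

lemma aux_pairs {α ι κ κ' : Type*} [MeasurableSpace α] [Fintype ι] [Fintype κ] [Fintype κ']
    (ν : Measure α)
    [IsProbabilityMeasure ν] (e : ι → κ) (he : Function.Injective e)
    (e' : ι → κ') (he' : Function.Injective e') :
    MeasurePreserving (fun (x : (κ → α) × (κ' → α)) i => (x.1 (e i), x.2 (e' i)))
      ((Measure.pi fun _ => ν).prod (Measure.pi fun _ => ν))
      (Measure.pi fun _ => ν.prod ν) := by
  have h1 := (aux_reindex ν e he).prod (aux_reindex ν e' he')
  have h2 := (measurePreserving_arrowProdEquivProdArrow α α ι (fun _ => ν) (fun _ => ν)).symm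
  exact h2.comp h1

lemma aux_update {κ α : Type*} [MeasurableSpace α] [Fintype κ] [DecidableEq κ] (ν : Measure α)
    [IsProbabilityMeasure ν] (k : κ) :
    MeasurePreserving (fun p : α × (κ → α) => Function.update p.2 k p.1)
      (ν.prod (Measure.pi fun _ => ν)) (Measure.pi fun _ => ν) := by
  have hm : Measurable (fun p : α × (κ → α) => Function.update p.2 k p.1) := by
    rw [measurable_pi_iff]
    intro j
    by_cases h : j = k
    · subst h; simp; fun_prop
    · simp [Function.update_of_ne h]; fun_prop
  refine ⟨hm, ?_⟩
  symm
  apply Measure.pi_eq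
  intro s hs
  rw [Measure.map_apply hm (MeasurableSet.univ_pi hs)]
  have : (fun p : α × (κ → α) => Function.update p.2 k p.1) ⁻¹' (Set.univ.pi s)
      = s k ×ˢ (Set.univ.pi (Function.update s k Set.univ)) := by
    ext p
    simp only [Set.mem_preimage, Set.mem_pi, Set.mem_univ, true_imp_iff, Set.mem_prod]
    constructor
    · intro h
      refine ⟨by simpa using h k, fun j => ?_⟩
      by_cases hj : j = k
      · subst hj; simp
      · simpa [Function.update_of_ne hj] using h j
    · rintro ⟨h1, h2⟩ j
      by_cases hj : j = k
      · subst hj; simpa using h1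
      · simpa [Function.update_of_ne hj] using h2 j
  rw [this, Measure.prod_prod, Measure.pi_pi,
    ← Finset.mul_prod_erase Finset.univ (fun i => ν (s i)) (Finset.mem_univ k),
    ← Finset.mul_prod_erase Finset.univ _ (Finset.mem_univ k)]
  simp only [Function.update_self, measure_univ, one_mul]
  congr 1
  apply Finset.prod_congr rfl
  intro j hj
  rw [Function.update_of_ne (Finset.ne_of_mem_erase hj)]

instance : IsProbabilityMeasure (Pmodel M n) := by
  unfold Pmodel; infer_instance

lemma aux_unif_Iic (w : ℝ) (hw : w ∈ Set.Icc (0:ℝ) 1) : 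
    ∫ x, (if x ≤ w then (1:ℝ) else 0) ∂unif = w := by
  have : (fun x : ℝ => if x ≤ w then (1:ℝ) else 0) = (Set.Iic w).indicator 1 := by
    ext x; simp [Set.indicator_apply]
  rw [this, integral_indicator_one measurableSet_Iic, unif, measureReal_restrict_apply measurableSet_Iic]
  have : Set.Iic w ∩ Set.Icc 0 1 = Set.Icc 0 w := by
    ext x; simp; constructor
    · rintro ⟨h1, h2, h3⟩; exact ⟨h2, h1⟩
    · rintro ⟨h1, h2⟩; exact ⟨h2, h1, h2.trans hw.2⟩
  rw [this]; simp [measureReal_def, hw.1]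

lemma aux_gdeg_meas (W : ℝ → ℝ → ℝ) (hWmeas : Measurable (Function.uncurry W)) :
    Measurable (gdeg W) := by
  have := hWmeas.stronglyMeasurable.integral_prod_right' (ν := volume.restrict (Set.Icc (0:ℝ) 1))
  exact this.measurable

lemma aux_Aedge_meas (W : ℝ → ℝ → ℝ) (hWmeas : Measurable (Function.uncurry W))
    (m : Fin M) (i j : Fin (n m)) : Measurable (Aedge W m i j) := by
  unfold Aedge Upos
  by_cases h : i = j
  · simp [h]
  · simp only [h, if_false]
    refine Measurable.ite (measurableSet_le (by fun_prop) ?_) measurable_const measurable_const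
    have h2 : Measurable (fun ω : Sample M n => (ω.1 ⟨m, i⟩, ω.1 ⟨m, j⟩)) := by fun_prop
    exact hWmeas.comp h2

lemma aux_dhat_meas (W : ℝ → ℝ → ℝ) (hWmeas : Measurable (Function.uncurry W))
    (m : Fin M) (i : Fin (n m)) : Measurable (dhat W m i) := by
  unfold dhat
  have := fun j => aux_Aedge_meas W hWmeas m i j
  fun_prop

lemma aux_mean (W : ℝ → ℝ → ℝ)
    (hWmeas : Measurable (Function.uncurry W))
    (hWrange : ∀ u ∈ Set.Icc (0:ℝ) 1, ∀ v ∈ Set.Icc (0:ℝ) 1, W u v ∈ Set.Icc (0:ℝ) 1)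
    (u : ℝ) (hu : u ∈ Set.Icc (0:ℝ) 1) :
    Measurable (fun p : ℝ × ℝ => if p.2 ≤ W u p.1 then (1:ℝ) else 0) ∧
    ∫ p : ℝ × ℝ, (if p.2 ≤ W u p.1 then (1:ℝ) else 0) ∂(unif.prod unif) = gdeg W u := by
  have hm : Measurable (fun p : ℝ × ℝ => if p.2 ≤ W u p.1 then (1:ℝ) else 0) := by
    refine Measurable.ite (measurableSet_le (by fun_prop) ?_) measurable_const measurable_const
    have h2 : Measurable (fun p : ℝ × ℝ => (u, p.1)) := by fun_prop
    exact hWmeas.comp h2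
  refine ⟨hm, ?_⟩
  rw [integral_prod]
  · unfold gdeg
    rw [show unif = volume.restrict (Set.Icc (0:ℝ) 1) from rfl]
    apply setIntegral_congr_fun measurableSet_Icc
    intro v hv
    exact aux_unif_Iic _ (hWrange u hu v hv)
  · refine Integrable.of_bound hm.aestronglyMeasurable 1 (Filter.Eventually.of_forall fun p => ?_)
    split_ifs <;> simp

lemma aux_deg (W : ℝ → ℝ → ℝ)
    (hWmeas : Measurable (Function.uncurry W))
    (hWsym : ∀ u v, W u v = W v u)
    (hWrange : ∀ u ∈ Set.Icc (0:ℝ) 1, ∀ v ∈ Set.Icc (0:ℝ) 1, W u v ∈ Set.Icc (0:ℝ) 1)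
    (m : Fin M) (i : Fin (n m)) (hn : 2 ≤ n m) (δ : ℝ) (hδ : 0 ≤ δ) :
    Pmodel M n {ω | δ ≤ |dhat W m i ω - gdeg W (Upos m i ω)|} ≤
      ENNReal.ofReal (2 * Real.exp (-(((n m : ℝ) - 1) * δ ^ 2 / 2))) := by
  set E : Set (Sample M n) := {ω | δ ≤ |dhat W m i ω - gdeg W (Upos m i ω)|} with hE
  have hEm : MeasurableSet E := by
    have h1 := aux_dhat_meas W hWmeas m i
    have h2 := aux_gdeg_meas W hWmeas
    have h3 : Measurable (Upos m i : Sample M n → ℝ) := by unfold Upos; fun_prop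
    exact measurableSet_le measurable_const (h1.sub (h2.comp h3)).abs
  have hmp : MeasurePreserving (fun q : ℝ × Sample M n => 
      ((Function.update q.2.1 ⟨m, i⟩ q.1, q.2.2) : Sample M n))
      (unif.prod (Pmodel M n)) (Pmodel M n) := by
    have h1 := (aux_update unif (⟨m, i⟩ : NodeIdx M n)).prod
      (MeasurePreserving.id (Measure.pi fun _ : DyadIdx M n => unif))
    have h2 := (measurePreserving_prodAssoc unif (Measure.pi fun _ : NodeIdx M n => unif)
      (Measure.pi fun _ : DyadIdx M n => unif)).symm
    exact h1.comp h2
  rw [← hmp.measure_preimage hEm.nullMeasurableSet, Measure.prod_apply (hmp.measurable hEm)]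
  have key : ∀ u ∈ Set.Icc (0:ℝ) 1, Pmodel M n (Prod.mk u ⁻¹' ((fun q : ℝ × Sample M n => 
      ((Function.update q.2.1 ⟨m, i⟩ q.1, q.2.2) : Sample M n)) ⁻¹' E)) ≤
      ENNReal.ofReal (2 * Real.exp (-(((n m : ℝ) - 1) * δ ^ 2 / 2))) := by
    intro u hu
    obtain ⟨hfm, hfi⟩ := aux_mean W hWmeas hWrange u hu
    have hT := aux_pairs (ι := {j : Fin (n m) // j ≠ i}) unif
      (fun j => (⟨m, j.1⟩ : NodeIdx M n)) (by
        intro a b h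
        simpa [Subtype.ext_iff] using h)
      (fun j => (⟨m, (min i j.1, max i j.1)⟩ : DyadIdx M n)) (by
        intro a b h
        simp only [Sigma.mk.injEq, heq_eq_eq, Prod.mk.injEq, true_and] at h
        ext
        have h1 := congrArg Fin.val h.1
        have h2 := congrArg Fin.val h.2
        simp only [Fin.coe_min, Fin.coe_max] at h1 h2
        omega)
    have hH := aux_hoeff (ι := {j : Fin (n m) // j ≠ i}) (unif.prod unif) _ hfm
      (fun p => by split_ifs <;> simp) δ hδ
    have hc : ((Fintype.card {j : Fin (n m) // j ≠ i} : ℕ) : ℝ) = (n m : ℝ) - 1 := by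
      rw [Fintype.card_subtype_compl]
      simp
      rw [Nat.cast_sub (by omega)]; simp
    rw [hfi, hc] at hH
    refine le_trans ?_ hH
    rw [← hT.map_eq]
    refine le_trans (measure_mono ?_) (Measure.le_map_apply hT.measurable.aemeasurable _)
    intro ω hω
    have hpos : (0:ℝ) < (n m : ℝ) - 1 := by
      have : (2:ℝ) ≤ n m := by exact_mod_cast hn
      linarith
    simp only [hE, Set.mem_preimage, Set.mem_ofPred_eq, Upos, Function.update_self] at hω ⊢
    have hsum : dhat W m i ((Function.update ω.1 ⟨m, i⟩ u, ω.2) : Sample M n) =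
        (∑ j : {j : Fin (n m) // j ≠ i}, if ω.2 ⟨m, (min i j.1, max i j.1)⟩ ≤ W u (ω.1 ⟨m, j.1⟩)
          then (1:ℝ) else 0) / ((n m : ℝ) - 1) := by
      unfold dhat
      congr 1
      rw [← Finset.add_sum_erase Finset.univ _ (Finset.mem_univ i)]
      rw [show Aedge W m i i ((Function.update ω.1 ⟨m, i⟩ u, ω.2) : Sample M n) = 0 by
        simp [Aedge], zero_add]
      rw [← Finset.sum_subtype (Finset.univ.erase i) (by simp)
        (fun j => if ω.2 ⟨m, (min i j, max i j)⟩ ≤ W u (ω.1 ⟨m, j⟩) then (1:ℝ) else 0)]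
      apply Finset.sum_congr rfl
      intro j hj
      have hj' := Finset.ne_of_mem_erase hj
      have : (⟨m, j⟩ : NodeIdx M n) ≠ ⟨m, i⟩ := by simpa using hj'
      simp [Aedge, Upos, Ne.symm hj', Function.update_of_ne this]
    rw [hsum] at hω
    have := mul_le_mul_of_nonneg_left hω hpos.le
    refine this.trans (le_of_eq ?_)
    rw [← abs_of_pos hpos, ← abs_mul, abs_of_pos hpos]
    congr 1
    field_simp
  calc _ ≤ ∫⁻ u, ENNReal.ofReal (2 * Real.exp (-(((n m : ℝ) - 1) * δ ^ 2 / 2))) ∂unif := by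
        apply lintegral_mono_ae
        have : ∀ᵐ u ∂unif, u ∈ Set.Icc (0:ℝ) 1 := ae_restrict_mem measurableSet_Icc
        filter_upwards [this] with u hu using key u hu
    _ = _ := by simp

lemma aux_card (M : ℕ) (n : Fin M → ℕ) : Fintype.card (NodeIdx M n) = Ntot M n := by
  simp [NodeIdx, Ntot]

lemma aux_cdf (M : ℕ) (n : Fin M → ℕ) (x : ℝ) (hx : x ∈ Set.Icc (0:ℝ) 1) (η : ℝ) (hη : 0 ≤ η) :
    Pmodel M n {ω | Ntot M n * η ≤
      |((Finset.univ.filter fun p : NodeIdx M n => Upos p.1 p.2 ω ≤ x).card : ℝ) - Ntot M n * x|} ≤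
      ENNReal.ofReal (2 * Real.exp (-((Ntot M n : ℝ) * η ^ 2 / 2))) := by
  have hm : Measurable (fun a : ℝ => if a ≤ x then (1:ℝ) else 0) :=
    Measurable.ite measurableSet_Iic measurable_const measurable_const
  have hH := aux_hoeff (ι := NodeIdx M n) unif _ hm (fun p => by split_ifs <;> simp) η hη
  rw [aux_unif_Iic x hx, aux_card] at hH
  refine le_trans ?_ hH
  have hT : MeasurePreserving (Prod.fst : Sample M n → _) (Pmodel M n) _ := measurePreserving_fst
  rw [← hT.map_eq]
  refine le_trans (measure_mono ?_) (Measure.le_map_apply hT.measurable.aemeasurable _)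
  intro ω hω
  simpa [Upos] using hω

lemma aux_mem (M : ℕ) (n : Fin M → ℕ) :
    Pmodel M n {ω | ∃ p : NodeIdx M n, Upos p.1 p.2 ω ∉ Set.Icc (0:ℝ) 1} = 0 := by
  have : {ω : Sample M n | ∃ p : NodeIdx M n, Upos p.1 p.2 ω ∉ Set.Icc (0:ℝ) 1} =
      ⋃ p : NodeIdx M n, {ω | Upos p.1 p.2 ω ∉ Set.Icc (0:ℝ) 1} := by ext; simp
  rw [this, measure_iUnion_null_iff]
  intro p
  have hT : MeasurePreserving (Prod.fst : Sample M n → _) (Pmodel M n) _ := measurePreserving_fst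
  have h2 := (measurePreserving_eval (fun _ : NodeIdx M n => unif) p).comp hT
  have h3 : unif (Set.Icc (0:ℝ) 1)ᶜ = 0 := by
    simp [unif]
  rw [← h2.measure_preimage measurableSet_Icc.compl.nullMeasurableSet] at h3
  exact h3

lemma aux_small (K₀ : ℕ) :
    (Finset.univ.filter fun p : NodeIdx M n => n p.1 < K₀).card ≤ M * K₀ := by
  have : (Finset.univ.filter fun p : NodeIdx M n => n p.1 < K₀) ⊆
      ((Finset.univ.filter fun m : Fin M => n m < K₀).sigma fun m => Finset.univ) := by
    intro p; simp
  refine (Finset.card_le_card this).trans ?_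
  rw [Finset.card_sigma]
  calc _ ≤ ∑ m ∈ Finset.univ.filter (fun m : Fin M => n m < K₀), K₀ := by
        apply Finset.sum_le_sum
        intro m hm
        simpa using (Finset.mem_filter.1 hm).2.le
    _ ≤ M * K₀ := by
        rw [Finset.sum_const, smul_eq_mul]
        refine Nat.mul_le_mul_right _ ((Finset.card_le_univ _).trans (by simp))

lemma aux_det (W : ℝ → ℝ → ℝ) (L₁ : ℝ) (hL₁ : 0 < L₁)
    (hmono : StrictMonoOn (gdeg W) (Set.Icc (0:ℝ) 1))
    (hlip : ∀ x ∈ Set.Icc (0:ℝ) 1, ∀ y ∈ Set.Icc (0:ℝ) 1,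
      L₁ * |x - y| ≤ |gdeg W x - gdeg W y|)
    (ε : ℝ) (hε : 0 < ε) (K : ℕ) (hK : 0 < K) (hKε : 1 / (K:ℝ) ≤ ε / 8) (K₀ : ℕ)
    (ω : Sample M n) (hU : ∀ p : NodeIdx M n, Upos p.1 p.2 ω ∈ Set.Icc (0:ℝ) 1)
    (hcdf : ∀ k ≤ K, 
      |((Finset.univ.filter fun p : NodeIdx M n => Upos p.1 p.2 ω ≤ (k:ℝ) / K).card : ℝ)
        - Ntot M n * ((k:ℝ) / K)| < Ntot M n * (ε / 8))
    (hdeg : ∀ m (i : Fin (n m)), K₀ ≤ n m →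
      |dhat W m i ω - gdeg W (Upos m i ω)| < L₁ * ε / 16)
    (m : Fin M) (hm : K₀ ≤ n m) (hN : 0 < Ntot M n) (hN1 : (M:ℝ) * K₀ ≤ Ntot M n * (ε / 8))
    (hN2 : 1 ≤ Ntot M n * (ε / 8)) (i : Fin (n m)) :
    |Uhat W m i ω - Upos m i ω| < ε := by
  set N : ℝ := ((Ntot M n : ℕ) : ℝ) with hNdef
  have hNpos : 0 < N := by rw [hNdef]; exact_mod_cast hN
  have hKpos : (0:ℝ) < K := by exact_mod_cast hK
  set x := Upos m i ω with hx
  have hx01 : x ∈ Set.Icc (0:ℝ) 1 := hU ⟨m, i⟩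
  have hsep : ∀ p ∈ Set.Icc (0:ℝ) 1, ∀ q ∈ Set.Icc (0:ℝ) 1, p + ε / 8 ≤ q →
      gdeg W p + L₁ * ε / 8 ≤ gdeg W q := by
    intro p hp q hq hpq
    have h1 := hlip q hq p hp
    have h2 := hmono hp hq (by linarith)
    rw [abs_of_pos (by linarith), abs_of_pos (by linarith)] at h1
    nlinarith
  set C : ℝ → ℝ := fun y =>
    ((Finset.univ.filter fun p : NodeIdx M n => Upos p.1 p.2 ω ≤ y).card : ℝ) with hC
  have hCmono : Monotone C := by
    intro a b hab
    simp only [hC]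
    exact_mod_cast Finset.card_le_card (Finset.monotone_filter_right _ fun p _ hp => le_trans hp hab)
  have hCN : ∀ y, C y ≤ N := by
    intro y
    rw [hNdef, ← aux_card]
    simp only [hC]
    exact_mod_cast Finset.card_le_univ _
  have hS : ((Finset.univ.filter fun p : NodeIdx M n => n p.1 < K₀).card : ℝ) ≤ N * (ε / 8) :=
    le_trans (by exact_mod_cast aux_small K₀) hN1
  have hi := abs_lt.1 (hdeg m i hm)
  -- upper
  have hup : (rhat W m i ω : ℝ) ≤ C (x + ε / 8) + N * (ε / 8) := by
    refine le_trans ?_ (add_le_add_right hS _)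
    simp only [hC, rhat]
    norm_cast
    refine le_trans (Finset.card_le_card ?_) (Finset.card_union_le _ _)
    intro p hp
    simp only [Finset.mem_filter, Finset.mem_univ, true_and, Finset.mem_union] at hp ⊢
    by_contra hcon
    push Not at hcon
    have h1 := abs_lt.1 (hdeg p.1 p.2 hcon.2)
    have h2 := hsep x hx01 _ (hU p) hcon.1.le
    linarith
  have hlo : C (x - ε / 8) ≤ (rhat W m i ω : ℝ) + N * (ε / 8) := by
    refine le_trans ?_ (add_le_add_right hS _)
    simp only [hC, rhat]
    norm_cast
    refine le_trans (Finset.card_le_card ?_) (Finset.card_union_le _ _)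
    intro p hp
    simp only [Finset.mem_filter, Finset.mem_univ, true_and, Finset.mem_union] at hp ⊢
    by_contra hcon
    push Not at hcon
    have h1 := abs_lt.1 (hdeg p.1 p.2 hcon.2)
    have h2 := hsep _ (hU p) x hx01 (by linarith)
    linarith
  have hCup : ∀ y, 0 ≤ y → C y ≤ N * (y + ε / 4) := by
    intro y hy
    by_cases hk : ⌈y * K⌉₊ ≤ K
    · have h1 := abs_lt.1 (hcdf _ hk)
      have h2 : y ≤ (⌈y * K⌉₊ : ℝ) / K := by
        rw [le_div_iff₀ hKpos]; exact Nat.le_ceil _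
      have h3 : (⌈y * K⌉₊ : ℝ) / K ≤ y + 1 / K := by
        rw [div_le_iff₀ hKpos]
        have := (Nat.ceil_lt_add_one (mul_nonneg hy hKpos.le)).le
        refine this.trans (le_of_eq ?_)
        field_simp
      have h4 := hCmono h2
      have h5 : C ((⌈y * K⌉₊ : ℝ) / K) ≤ N * ((⌈y * K⌉₊ : ℝ) / K) + N * (ε / 8) := by
        simp only [hC]; linarith
      have h6 : N * ((⌈y * K⌉₊ : ℝ) / K) ≤ N * (y + ε / 8) :=
        mul_le_mul_of_nonneg_left (by linarith) hNpos.le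
      linarith
    · have h1 : 1 < y := by
        by_contra hcon
        push Not at hcon
        apply hk
        rw [Nat.ceil_le]
        nlinarith
      have := hCN y
      nlinarith
  have hClo : ∀ y, y ≤ 1 → N * (y - ε / 4) ≤ C y := by
    intro y hy
    by_cases hy0 : 0 ≤ y
    · have hk : ⌊y * K⌋₊ ≤ K := by
        have : y * K ≤ K := by nlinarith
        exact_mod_cast (Nat.floor_le (mul_nonneg hy0 hKpos.le)).trans this
      have h1 := abs_lt.1 (hcdf _ hk)
      have h2 : (⌊y * K⌋₊ : ℝ) / K ≤ y := by
        rw [div_le_iff₀ hKpos]; exact Nat.floor_le (mul_nonneg hy0 hKpos.le)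
      have h3 : y - 1 / K ≤ (⌊y * K⌋₊ : ℝ) / K := by
        rw [le_div_iff₀ hKpos]
        have := (Nat.sub_one_lt_floor (y * K)).le
        refine le_trans (le_of_eq ?_) this
        field_simp
      have h4 := hCmono h2
      have h5 : N * ((⌊y * K⌋₊ : ℝ) / K) - N * (ε / 8) ≤ C ((⌊y * K⌋₊ : ℝ) / K) := by
        simp only [hC]; linarith
      have h6 : N * (y - ε / 8) ≤ N * ((⌊y * K⌋₊ : ℝ) / K) :=
        mul_le_mul_of_nonneg_left (by linarith) hNpos.le
      linarith
    · have : 0 ≤ C y := by simp only [hC]; positivity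
      nlinarith
  have a1 := hCup (x + ε / 8) (by linarith [hx01.1])
  have a2 := hClo (x - ε / 8) (by linarith [hx01.2])
  have e : Uhat W m i ω - x = ((rhat W m i ω : ℝ) - 1 / 2 - N * x) / N := by
    unfold Uhat
    rw [← hNdef]
    field_simp
  rw [e, abs_div, abs_of_pos hNpos, div_lt_iff₀ hNpos, abs_lt]
  have : 0 < ε * N := by positivity
  constructor <;> nlinarith

lemma aux_bad (W : ℝ → ℝ → ℝ)
    (hWmeas : Measurable (Function.uncurry W))
    (hWsym : ∀ u v, W u v = W v u)
    (hWrange : ∀ u ∈ Set.Icc (0:ℝ) 1, ∀ v ∈ Set.Icc (0:ℝ) 1, W u v ∈ Set.Icc (0:ℝ) 1)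
    (L₁ : ℝ) (hL₁ : 0 < L₁)
    (hmono : StrictMonoOn (gdeg W) (Set.Icc (0:ℝ) 1))
    (hlip : ∀ x ∈ Set.Icc (0:ℝ) 1, ∀ y ∈ Set.Icc (0:ℝ) 1,
      L₁ * |x - y| ≤ |gdeg W x - gdeg W y|)
    (ε : ℝ) (hε : 0 < ε) (K : ℕ) (hK : 0 < K) (hKε : 1 / (K:ℝ) ≤ ε / 8) (K₀ : ℕ) (hK₀ : 2 ≤ K₀)
    (m : Fin M) (hm : K₀ ≤ n m) (hN : 0 < Ntot M n) (hN1 : (M:ℝ) * K₀ ≤ Ntot M n * (ε / 8))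
    (hN2 : 1 ≤ Ntot M n * (ε / 8)) (τ : ℝ) (hτ : 0 ≤ τ)
    (hbig : ∀ k : ℕ, K₀ ≤ k → k * (2 * Real.exp (-(((k : ℝ) - 1) * (L₁ * ε / 16) ^ 2 / 2))) ≤ τ)
    (hNbig : 2 * Real.exp (-((Ntot M n : ℝ) * (ε / 8) ^ 2 / 2)) ≤ τ) :
    Pmodel M n {ω | ∃ i : Fin (n m), ε ≤ |Uhat W m i ω - Upos m i ω|} ≤
      ENNReal.ofReal ((M + (K + 1)) * τ) := by
  have hsub : {ω : Sample M n | ∃ i : Fin (n m), ε ≤ |Uhat W m i ω - Upos m i ω|} ⊆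
      {ω | ∃ p : NodeIdx M n, Upos p.1 p.2 ω ∉ Set.Icc (0:ℝ) 1} ∪
      ((⋃ m' : Fin M, ⋃ i : Fin (n m'), {ω | K₀ ≤ n m' ∧
          L₁ * ε / 16 ≤ |dhat W m' i ω - gdeg W (Upos m' i ω)|}) ∪
      ⋃ k ∈ Finset.range (K + 1), {ω | Ntot M n * (ε / 8) ≤
        |((Finset.univ.filter fun p : NodeIdx M n => Upos p.1 p.2 ω ≤ (k:ℝ) / K).card : ℝ)
          - Ntot M n * ((k:ℝ) / K)|}) := by
    rintro ω ⟨i, hi⟩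
    by_contra hcon
    simp only [Set.mem_union, Set.mem_iUnion, Set.mem_ofPred_eq, Finset.mem_range, not_or,
      not_exists, not_and, not_not, not_le] at hcon
    obtain ⟨h1, h2, h3⟩ := hcon
    exact absurd hi (not_le.2 (aux_det W L₁ hL₁ hmono hlip ε hε K hK hKε K₀ ω h1
      (fun k hk => h3 k (by omega)) h2 m hm hN hN1 hN2 i))
  refine (measure_mono hsub).trans ((measure_union_le _ _).trans ?_)
  rw [aux_mem, zero_add]
  refine (measure_union_le _ _).trans ?_
  rw [add_mul, ENNReal.ofReal_add (by positivity) (by positivity)]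
  refine add_le_add ?_ ?_
  · refine (measure_iUnion_le _).trans ?_
    rw [tsum_fintype]
    calc _ ≤ ∑ m' : Fin M, ENNReal.ofReal τ := by
          apply Finset.sum_le_sum
          intro m' _
          by_cases hb : K₀ ≤ n m'
          · refine (measure_iUnion_le _).trans ?_
            rw [tsum_fintype]
            calc _ ≤ ∑ i : Fin (n m'), ENNReal.ofReal
                  (2 * Real.exp (-(((n m' : ℝ) - 1) * (L₁ * ε / 16) ^ 2 / 2))) := by
                  apply Finset.sum_le_sum
                  intro i _
                  refine (measure_mono ?_).trans (aux_deg W hWmeas hWsym hWrange m' i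
                    (hK₀.trans hb) (L₁ * ε / 16) (by positivity))
                  intro ω hω
                  exact hω.2
              _ ≤ _ := by
                  rw [Finset.sum_const, Finset.card_univ, Fintype.card_fin, nsmul_eq_mul,
                    ← ENNReal.ofReal_natCast, ← ENNReal.ofReal_mul (by positivity)]
                  exact ENNReal.ofReal_le_ofReal (hbig _ hb)
          · simp [hb]
      _ = _ := by
          rw [Finset.sum_const, Finset.card_univ, Fintype.card_fin, nsmul_eq_mul,
            ← ENNReal.ofReal_natCast, ← ENNReal.ofReal_mul (by positivity)]
  · refine (measure_biUnion_finset_le _ _).trans ?_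
    calc _ ≤ ∑ k ∈ Finset.range (K + 1), ENNReal.ofReal τ := by
          apply Finset.sum_le_sum
          intro k hk
          have hk' : (k:ℝ) ≤ K := by exact_mod_cast Nat.lt_succ_iff.1 (Finset.mem_range.1 hk)
          refine (aux_cdf M n ((k:ℝ) / K) ⟨by positivity, div_le_one_of_le₀ hk' (by positivity)⟩
            (ε / 8) (by positivity)).trans (ENNReal.ofReal_le_ofReal hNbig)
      _ = _ := by
          rw [Finset.sum_const, Finset.card_range, nsmul_eq_mul,
            ← ENNReal.ofReal_natCast, ← ENNReal.ofReal_mul (by positivity)]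
          push_cast; rfl

lemma aux_lim (c : ℝ) (hc : 0 < c) :
    Filter.Tendsto (fun k : ℕ => (k:ℝ) * (2 * Real.exp (-(((k : ℝ) - 1) * c / 2))))
      Filter.atTop (nhds 0) := by
  have h := Real.tendsto_pow_mul_exp_neg_atTop_nhds_zero 1
  have h2 : Filter.Tendsto (fun k : ℕ => (k:ℝ) * (c / 2)) Filter.atTop Filter.atTop :=
    tendsto_natCast_atTop_atTop.atTop_mul_const (by positivity)
  have h3 := (h.comp h2).mul_const (4 / c * Real.exp (c / 2))
  rw [zero_mul] at h3
  refine h3.congr fun k => ?_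
  simp only [Function.comp, pow_one]
  rw [show -(((k : ℝ) - 1) * c / 2) = -((k:ℝ) * (c / 2)) + c / 2 by ring, Real.exp_add]
  field_simp
  ring

lemma aux_lim2 (c : ℝ) (hc : 0 < c) :
    Filter.Tendsto (fun k : ℕ => (2 * Real.exp (-((k : ℝ) * c / 2))))
      Filter.atTop (nhds 0) := by
  have h2 : Filter.Tendsto (fun k : ℕ => (k:ℝ) * (c / 2)) Filter.atTop Filter.atTop :=
    tendsto_natCast_atTop_atTop.atTop_mul_const (by positivity)
  have h3 := (Real.tendsto_exp_neg_atTop_nhds_zero.comp h2).const_mul 2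
  rw [mul_zero] at h3
  refine h3.congr fun k => ?_
  simp only [Function.comp]
  ring_nf

/-- **Corollary (i) (Uniform consistency when one graph size diverges).**
Fix the number of graphs `M` and consider a sequence (indexed by `t`) of collections of
graphs sampled from the same graphon `W`, whose normalized degree function `g` is
strictly increasing and satisfies `L₁|x-y| ≤ |g(x)-g(y)|` on `[0,1]`. If there is a
network index `m⋆` with `n_t^{(m⋆)} → ∞`, then
`max_{i ∈ ⟦n^{(m⋆)}⟧} |Û^{JGS}_{i,(m⋆)} - U_{i,(m⋆)}| → 0` in probability, i.e. for
every `ε > 0` the probability that some node of graph `m⋆` has latent position error at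
least `ε` tends to `0`. -/
theorem jgs_latent_uniform_consistency_one_graph
    (M : ℕ) (W : ℝ → ℝ → ℝ)
    (hWmeas : Measurable (Function.uncurry W))
    (hWsym : ∀ u v, W u v = W v u)
    (hWrange : ∀ u ∈ Set.Icc (0:ℝ) 1, ∀ v ∈ Set.Icc (0:ℝ) 1, W u v ∈ Set.Icc (0:ℝ) 1)
    (L₁ : ℝ) (hL₁ : 0 < L₁)
    (hmono : StrictMonoOn (gdeg W) (Set.Icc (0:ℝ) 1))
    (hlip : ∀ x ∈ Set.Icc (0:ℝ) 1, ∀ y ∈ Set.Icc (0:ℝ) 1,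
      L₁ * |x - y| ≤ |gdeg W x - gdeg W y|)
    (n : ℕ → Fin M → ℕ) (mstar : Fin M)
    (hgrow : Filter.Tendsto (fun t => n t mstar) Filter.atTop Filter.atTop) :
    ∀ ε > (0:ℝ),
      Filter.Tendsto
        (fun t => Pmodel M (n t)
          {ω | ∃ i : Fin (n t mstar), ε ≤ |Uhat W mstar i ω - Upos mstar i ω|})
        Filter.atTop (nhds 0) := by
  intro ε hε
  rw [ENNReal.tendsto_nhds_zero]
  intro θ hθ
  obtain ⟨K, hK⟩ := exists_nat_gt (8 / ε)
  have hKpos' : (0:ℝ) < K := lt_trans (by positivity) hK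
  have hKpos : 0 < K := by exact_mod_cast hKpos'
  have hKε : 1 / (K:ℝ) ≤ ε / 8 := by
    rw [div_lt_iff₀ hε] at hK
    rw [div_le_iff₀ hKpos']
    linarith
  obtain ⟨σ, hσ, hσθ⟩ : ∃ σ : ℝ, 0 < σ ∧ ENNReal.ofReal σ ≤ θ := by
    by_cases h : θ = ⊤
    · exact ⟨1, one_pos, by simp [h]⟩
    · exact ⟨θ.toReal, ENNReal.toReal_pos hθ.ne' h, by rw [ENNReal.ofReal_toReal h]⟩
  set τ : ℝ := σ / (M + (K + 1)) with hτ
  have hτpos : 0 < τ := by positivity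
  have hc1 : 0 < (L₁ * ε / 16) ^ 2 := by positivity
  have hc2 : 0 < (ε / 8) ^ 2 := by positivity
  obtain ⟨K₁, hK₁⟩ := Filter.eventually_atTop.1 ((aux_lim _ hc1).eventually_lt_const hτpos)
  have hNt : Filter.Tendsto (fun t => Ntot M (n t)) Filter.atTop Filter.atTop :=
    Filter.tendsto_atTop_mono (fun t => Finset.single_le_sum (f := fun m => n t m)
      (fun _ _ => Nat.zero_le _) (Finset.mem_univ mstar)) hgrow
  have hNr : Filter.Tendsto (fun t => (Ntot M (n t) : ℝ) * (ε / 8)) Filter.atTop Filter.atTop :=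
    (tendsto_natCast_atTop_atTop.comp hNt).atTop_mul_const (by positivity)
  filter_upwards [hNt.eventually_gt_atTop 0, hgrow.eventually_ge_atTop (max 2 K₁),
    hNr.eventually_ge_atTop ((M:ℝ) * (max 2 K₁ : ℕ)), hNr.eventually_ge_atTop 1,
    ((aux_lim2 _ hc2).comp hNt).eventually_lt_const hτpos] with t h1 h2 h3 h4 h5
  refine (aux_bad W hWmeas hWsym hWrange L₁ hL₁ hmono hlip ε hε K hKpos hKε (max 2 K₁)
    (le_max_left _ _) mstar h2 h1 h3 h4 τ hτpos.le
    (fun k hk => (hK₁ k ((le_max_right _ _).trans hk)).le) h5.le).trans ?_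
  rw [hτ, mul_div_cancel₀ _ (by positivity)]
  exact hσθ

end
end

section
/- Let W:[0,1]²→[0,1] be a graphon whose normalized degree function g is strictly increasing and satisfies L₁|x−y| ≤ |g(x)−g(y)| for all x,y∈[0,1] and some L₁>0. Let the number of graphs M be fixed, and suppose n^{(m)} → ∞ for every m∈⟦M⟧. Then max_{m∈⟦M⟧} max_{i∈⟦n^{(m)}⟧} |Û^{JGS}_{i,(m)} − U_{i,(m)}| converges to 0 in probability. -/
open MeasureTheory Set Finset
open scoped Classical

noncomputable section

variable {M : ℕ} {n : Fin M → ℕ}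

open ProbabilityTheory in
lemma hoeff {ι α : Type*} [Fintype ι] [MeasurableSpace α] (μ : Measure α)
    [IsProbabilityMeasure μ] (f : α → ℝ) (hf : Measurable f) (hf01 : ∀ x, f x ∈ Set.Icc (0:ℝ) 1)
    (a : ℝ) (ha : ∫ x, f x ∂μ = a) (δ : ℝ) (hδ : 0 < δ) :
    (Measure.pi fun _ : ι => μ) {z | δ * Fintype.card ι ≤ |∑ j, f (z j) - Fintype.card ι * a|} ≤
      ENNReal.ofReal (2 * Real.exp (-(2 * δ ^ 2 * Fintype.card ι))) := by
  have key : ∀ (h : α → ℝ), Measurable h → (∀ x, h x ∈ Set.Icc (-1:ℝ) 1 ) →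
      (∃ b c : ℝ, c - b = 1 ∧ ∀ x, h x ∈ Set.Icc b c) → ∀ a', ∫ x, h x ∂μ = a' →
      (Measure.pi fun _ : ι => μ) {z | δ * Fintype.card ι ≤ ∑ j, (h (z j) - a')} ≤
      ENNReal.ofReal (Real.exp (-(2 * δ ^ 2 * Fintype.card ι))) := by
    rintro h hh - ⟨b, c, hbc, hmem⟩ a' ha'
    have hind : iIndepFun (fun (j : ι) (z : ι → α) => h (z j) - a') (Measure.pi fun _ : ι => μ) :=
      iIndepFun_pi (μ := fun _ : ι => μ) (X := fun _ x => h x - a')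
        (fun _ => (hh.sub_const _).aemeasurable)
    have hsub : ∀ j ∈ (Finset.univ : Finset ι),
        HasSubgaussianMGF (fun (z : ι → α) => h (z j) - a') ((‖c - b‖₊ / 2) ^ 2)
          (Measure.pi fun _ : ι => μ) := by
      intro j _
      have := hasSubgaussianMGF_of_mem_Icc (μ := Measure.pi fun _ : ι => μ)
        (X := fun z => h (z j)) (a := b) (b := c)
        (hh.comp (measurable_pi_apply j)).aemeasurable
        (Filter.Eventually.of_forall fun z => hmem _)
      have e : ∫ z, h (z j) ∂(Measure.pi fun _ : ι => μ) = a' := by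
        rw [← ha']
        have mp := measurePreserving_eval (fun _ : ι => μ) j
        conv_rhs => rw [← mp.map_eq]
        rw [integral_map mp.measurable.aemeasurable hh.aestronglyMeasurable]
      rwa [e] at this
    have := HasSubgaussianMGF.measure_sum_ge_le_of_iIndepFun hind hsub
      (ε := δ * Fintype.card ι) (by positivity)
    rw [← ENNReal.ofReal_toReal (measure_ne_top (Measure.pi fun _ : ι => μ) _)]
    apply ENNReal.ofReal_le_ofReal
    refine this.trans (le_of_eq ?_)
    congr 1
    rw [hbc]
    simp
    by_cases h0 : (Fintype.card ι : ℝ) = 0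
    · simp [h0]
    · field_simp
  have h1 := key f hf (fun x => ⟨by linarith [(hf01 x).1], (hf01 x).2⟩)
    ⟨0, 1, by norm_num, hf01⟩ a ha
  have h2 := key (fun x => - f x) hf.neg
    (fun x => ⟨by linarith [(hf01 x).2], by linarith [(hf01 x).1]⟩)
    ⟨-1, 0, by norm_num, fun x => ⟨by linarith [(hf01 x).2], by linarith [(hf01 x).1]⟩⟩ (-a)
    (by rw [integral_neg, ha])
  calc _ ≤ (Measure.pi fun _ : ι => μ) ({z | δ * Fintype.card ι ≤ ∑ j, (f (z j) - a)} ∪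
        {z | δ * Fintype.card ι ≤ ∑ j, (- f (z j) - -a)}) := by
        apply measure_mono
        intro z hz
        simp only [Set.mem_ofPred_eq, Set.mem_union, Finset.sum_sub_distrib, Finset.sum_neg_distrib,
          Finset.sum_const, Finset.card_univ, nsmul_eq_mul] at hz ⊢
        rcases le_abs.1 hz with h | h
        · left; exact h
        · right; linarith
    _ ≤ _ := measure_union_le _ _
    _ ≤ _ := add_le_add h1 h2
    _ = _ := by
      rw [← ENNReal.ofReal_add (by positivity) (by positivity)]; congr 1; ring

lemma mp_reindex {ι κ α : Type*} [Fintype ι] [Fintype κ] [MeasurableSpace α] (μ : Measure α)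
    [IsProbabilityMeasure μ] (e : κ → ι) (he : Function.Injective e) :
    MeasurePreserving (fun (z : ι → α) (k : κ) => z (e k)) (Measure.pi fun _ : ι => μ)
      (Measure.pi fun _ : κ => μ) := by
  refine ⟨by fun_prop, ?_⟩
  have hind : ProbabilityTheory.iIndepFun (fun (k : κ) (z : ι → α) => z (e k)) (Measure.pi fun _ : ι => μ) :=
    (ProbabilityTheory.iIndepFun_pi (μ := fun _ : ι => μ) (X := fun _ x => x)
        (fun _ => aemeasurable_id)).precomp he
  rw [ProbabilityTheory.iIndepFun_iff_map_fun_eq_pi_map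
    (fun k => (measurable_pi_apply _).aemeasurable)] at hind
  rw [hind]
  congr 1
  funext k
  exact (measurePreserving_eval (fun _ : ι => μ) (e k)).map_eq

lemma e_inj {k : ℕ} (m : Fin M) (hk : n m = k) (i : Fin (n m)) : Function.Injective
    (fun j : Fin (n m) => (⟨m, (min i j, max i j)⟩ : DyadIdx M n)) := by
  intro j j' h
  simp only [Sigma.mk.injEq, heq_eq_eq, true_and, Prod.mk.injEq] at h
  obtain ⟨h1, h2⟩ := h
  rcases le_total i j with a | a <;> rcases le_total i j' with b | b <;>
    simp_all <;> order

lemma mp_phi (m : Fin M) (i : Fin (n m)) :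
    MeasurePreserving (fun (ω : Sample M n) (j : Fin (n m)) =>
      (ω.1 ⟨m, j⟩, ω.2 ⟨m, (min i j, max i j)⟩)) (Pmodel M n)
      (Measure.pi fun _ : Fin (n m) => unif.prod unif) := by
  have h1 := mp_reindex unif (fun j : Fin (n m) => (⟨m, j⟩ : NodeIdx M n))
    (fun a b h => by simpa using h)
  have h2 := mp_reindex unif _ (e_inj (n := n) m rfl i)
  have h3 := (measurePreserving_arrowProdEquivProdArrow ℝ ℝ (Fin (n m))
    (fun _ => unif) (fun _ => unif)).symm
  exact h3.comp (h1.prod h2)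

lemma gdeg_meas (W : ℝ → ℝ → ℝ) (hW : Measurable (Function.uncurry W)) : Measurable (gdeg W) :=
  (hW.stronglyMeasurable.integral_prod_right' (ν := volume.restrict (Set.Icc (0:ℝ) 1))).measurable

lemma unif_ae : ∀ᵐ x ∂unif, x ∈ Set.Icc (0:ℝ) 1 := ae_restrict_mem measurableSet_Icc

lemma unif_Iic (c : ℝ) (hc : c ∈ Set.Icc (0:ℝ) 1) : unif.real (Set.Iic c) = c := by
  have : Set.Iic c ∩ Set.Icc 0 1 = Set.Icc 0 c := by
    ext x; simp; constructor
    · rintro ⟨a, b, c⟩; exact ⟨b, a⟩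
    · rintro ⟨a, b⟩; exact ⟨b, a, b.trans hc.2⟩
  simp [unif, Measure.real, Measure.restrict_apply measurableSet_Iic, this, hc.1]

lemma mean_edge (W : ℝ → ℝ → ℝ) (hW : Measurable (Function.uncurry W))
    (hWrange : ∀ u ∈ Set.Icc (0:ℝ) 1, ∀ v ∈ Set.Icc (0:ℝ) 1, W u v ∈ Set.Icc (0:ℝ) 1)
    (u : ℝ) (hu : u ∈ Set.Icc (0:ℝ) 1) :
    ∫ z, (if z.2 ≤ W u z.1 then (1:ℝ) else 0) ∂(unif.prod unif) = gdeg W u := by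
  have hWu : Measurable (W u) := hW.comp (measurable_const.prodMk measurable_id)
  have hm : Measurable fun z : ℝ × ℝ => (if z.2 ≤ W u z.1 then (1:ℝ) else 0) :=
    Measurable.ite (measurableSet_le measurable_snd (hWu.comp measurable_fst))
      measurable_const measurable_const
  rw [integral_prod]
  · unfold gdeg
    change _ = ∫ v, W u v ∂unif
    apply integral_congr_ae
    filter_upwards [unif_ae] with v hv
    have : (fun y : ℝ => if y ≤ W u v then (1:ℝ) else 0) = (Set.Iic (W u v)).indicator 1 := by
      ext y; simp [Set.indicator]
    simp only [this]
    rw [integral_indicator_one measurableSet_Iic, unif_Iic _ (hWrange u hu v hv)]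
  · refine Integrable.of_mem_Icc 0 1 hm.aemeasurable (Filter.Eventually.of_forall fun z => ?_)
    split_ifs <;> simp

lemma fin_bound (W : ℝ → ℝ → ℝ) (hW : Measurable (Function.uncurry W))
    (hWrange : ∀ u ∈ Set.Icc (0:ℝ) 1, ∀ v ∈ Set.Icc (0:ℝ) 1, W u v ∈ Set.Icc (0:ℝ) 1)
    (δ : ℝ) (hδ : 0 < δ) (k : ℕ) (i : Fin k) (hk : 2 ≤ k) :
    (Measure.pi fun _ : Fin k => unif.prod unif)
      {z | δ ≤ |(∑ j, if i = j then (0:ℝ) else if (z j).2 ≤ W (z i).1 (z j).1 then 1 else 0)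
          / ((k:ℝ) - 1) - gdeg W (z i).1|} ≤
      ENNReal.ofReal (2 * Real.exp (-(2 * δ ^ 2 * (k - 1)))) := by
  obtain ⟨k, rfl⟩ : ∃ l, k = l + 1 := ⟨k - 1, by omega⟩
  have hk0 : (0:ℝ) < k := by exact_mod_cast (by omega : 0 < k)
  have mp := measurePreserving_piFinSuccAbove (fun _ : Fin (k+1) => unif.prod unif) i
  set S : Set ((ℝ × ℝ) × (Fin k → ℝ × ℝ)) :=
    {q | δ * Fintype.card (Fin k) ≤ |∑ j, (if (q.2 j).2 ≤ W q.1.1 (q.2 j).1 then (1:ℝ) else 0)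
      - Fintype.card (Fin k) * gdeg W q.1.1|} with hS
  have hSm : MeasurableSet S := by
    apply measurableSet_le measurable_const
    have hg := gdeg_meas W hW
    have : Measurable fun q : (ℝ × ℝ) × (Fin k → ℝ × ℝ) =>
      ∑ j, (if (q.2 j).2 ≤ W q.1.1 (q.2 j).1 then (1:ℝ) else 0) := by
      refine Finset.measurable_sum _ fun j _ => ?_
      refine Measurable.ite (measurableSet_le (by fun_prop) ?_) measurable_const measurable_const
      exact hW.comp (f := fun q : (ℝ × ℝ) × (Fin k → ℝ × ℝ) => (q.1.1, (q.2 j).1)) (by fun_prop)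
    have h2 : Measurable fun q : (ℝ × ℝ) × (Fin k → ℝ × ℝ) => gdeg W q.1.1 :=
      hg.comp (by fun_prop)
    exact (this.sub (h2.const_mul _)).abs
  calc _ ≤ (Measure.pi fun _ : Fin (k+1) => unif.prod unif)
        ((MeasurableEquiv.piFinSuccAbove (fun _ => ℝ × ℝ) i) ⁻¹' S) := by
        apply measure_mono
        intro z hz
        simp only [Set.mem_ofPred_eq, Set.mem_preimage, hS] at hz ⊢
        rw [Fin.sum_univ_succAbove _ i] at hz
        simp only [if_true, zero_add, (Fin.succAbove_ne i _).symm, if_false, Nat.cast_add,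
          Nat.cast_one, add_sub_cancel_right] at hz
        have e : ∀ a b : ℝ, a / k - b = (a - k * b) / k := by intro a b; field_simp
        rw [e, abs_div, abs_of_pos hk0, le_div_iff₀ hk0] at hz
        rw [Fintype.card_fin]
        exact hz
    _ = ((unif.prod unif).prod (Measure.pi fun _ : Fin k => unif.prod unif)) S :=
        mp.measure_preimage hSm.nullMeasurableSet
    _ = ∫⁻ x, (Measure.pi fun _ : Fin k => unif.prod unif) (Prod.mk x ⁻¹' S) ∂(unif.prod unif) :=
        Measure.prod_apply hSm
    _ ≤ ∫⁻ x, ENNReal.ofReal (2 * Real.exp (-(2 * δ ^ 2 * k))) ∂(unif.prod unif) := by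
        apply lintegral_mono_ae
        have hae : ∀ᵐ x ∂(unif.prod unif), x.1 ∈ Set.Icc (0:ℝ) 1 :=
          Measure.quasiMeasurePreserving_fst.ae unif_ae
        filter_upwards [hae] with x hx
        have hWu : Measurable (W x.1) := hW.comp (measurable_const.prodMk measurable_id)
        have := hoeff (ι := Fin k) (unif.prod unif)
          (fun z => if z.2 ≤ W x.1 z.1 then (1:ℝ) else 0)
          (Measurable.ite (measurableSet_le measurable_snd (hWu.comp measurable_fst))
            measurable_const measurable_const) (fun z => by split_ifs <;> simp)
          _ (mean_edge W hW hWrange x.1 hx) δ hδ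
        rw [Fintype.card_fin] at this
        rw [hS, Fintype.card_fin]
        exact this
    _ = _ := by simp

lemma dhat_bound (W : ℝ → ℝ → ℝ) (hW : Measurable (Function.uncurry W))
    (hWrange : ∀ u ∈ Set.Icc (0:ℝ) 1, ∀ v ∈ Set.Icc (0:ℝ) 1, W u v ∈ Set.Icc (0:ℝ) 1)
    (δ : ℝ) (hδ : 0 < δ) (m : Fin M) (i : Fin (n m)) (hk : 2 ≤ n m) :
    Pmodel M n {ω | δ ≤ |dhat W m i ω - gdeg W (Upos m i ω)|} ≤
      ENNReal.ofReal (2 * Real.exp (-(2 * δ ^ 2 * (n m - 1)))) := by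
  have mp := mp_phi (n := n) m i
  refine le_trans ?_ (fin_bound W hW hWrange δ hδ (n m) i hk)
  refine le_trans (measure_mono ?_) (mp.measure_preimage_le _)
  intro ω hω
  exact hω

lemma cdf_bound (c : ℝ) (hc : c ∈ Set.Icc (0:ℝ) 1) (δ : ℝ) (hδ : 0 < δ) :
    Pmodel M n {ω | δ * Ntot M n ≤
      |((Finset.univ.filter fun p : NodeIdx M n => ω.1 p ≤ c).card : ℝ) - Ntot M n * c|} ≤
      ENNReal.ofReal (2 * Real.exp (-(2 * δ ^ 2 * Ntot M n))) := by
  have hcard : Fintype.card (NodeIdx M n) = Ntot M n := by simp [Ntot]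
  have hi : ∫ x, (if x ≤ c then (1:ℝ) else 0) ∂unif = c := by
    have : (fun y : ℝ => if y ≤ c then (1:ℝ) else 0) = (Set.Iic c).indicator 1 := by
      ext y; simp [Set.indicator]
    rw [this, integral_indicator_one measurableSet_Iic, unif_Iic _ hc]
  have := hoeff (ι := NodeIdx M n) unif (fun x => if x ≤ c then (1:ℝ) else 0)
    (Measurable.ite measurableSet_Iic measurable_const measurable_const)
    (fun z => by split_ifs <;> simp) c hi δ hδ
  rw [hcard] at this
  have mp : MeasurePreserving Prod.fst (Pmodel M n) (Measure.pi fun _ : NodeIdx M n => unif) :=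
    measurePreserving_fst
  refine le_trans ?_ this
  refine le_trans (measure_mono ?_) (mp.measure_preimage_le _)
  intro ω hω
  simpa [Finset.sum_boole] using hω

lemma determ (W : ℝ → ℝ → ℝ) (L₁ : ℝ) (hL₁ : 0 < L₁)
    (hmono : StrictMonoOn (gdeg W) (Set.Icc (0:ℝ) 1))
    (hlip : ∀ x ∈ Set.Icc (0:ℝ) 1, ∀ y ∈ Set.Icc (0:ℝ) 1,
      L₁ * |x - y| ≤ |gdeg W x - gdeg W y|)
    (ε : ℝ) (K : ℕ) (hK : 0 < K) (hKε : 8 / ε < K) (hε : 0 < ε)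
    (ω : Sample M n) (hN : 8 / ε < Ntot M n)
    (hU : ∀ p, ω.1 p ∈ Set.Icc (0:ℝ) 1)
    (hd : ∀ m i, |dhat W m i ω - gdeg W (Upos m i ω)| < L₁ / (2 * K))
    (hF : ∀ k : ℕ, k ≤ K →
      |((Finset.univ.filter fun p : NodeIdx M n => ω.1 p ≤ (k:ℝ) / K).card : ℝ)
        - Ntot M n * ((k:ℝ) / K)| < ε / 8 * Ntot M n)
    (m : Fin M) (i : Fin (n m)) : |Uhat W m i ω - Upos m i ω| < ε := by
  have hK' : (0:ℝ) < K := by exact_mod_cast hK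
  have hN' : (0:ℝ) < Ntot M n := lt_trans (by positivity) hN
  set N : ℝ := (Ntot M n : ℝ) with hNdef
  set u := Upos m i ω with hu
  have hu01 : u ∈ Set.Icc (0:ℝ) 1 := hU ⟨m, i⟩
  have hKinv : 1 / (K:ℝ) < ε / 8 := by
    rw [div_lt_iff₀ hε] at hKε
    rw [div_lt_div_iff₀ hK' (by norm_num)]; linarith
  have hNinv : 1 / N < ε / 8 := by
    rw [div_lt_iff₀ hε] at hN
    rw [div_lt_div_iff₀ hN' (by norm_num)]; linarith
  -- separation
  have sep : ∀ x ∈ Set.Icc (0:ℝ) 1, ∀ y ∈ Set.Icc (0:ℝ) 1, x + 1 / K ≤ y →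
      gdeg W x + L₁ / K ≤ gdeg W y := by
    intro x hx y hy hxy
    have h1 : 0 < 1 / (K:ℝ) := by positivity
    have h2 := hmono hx hy (by linarith)
    have h3 := hlip y hy x hx
    rw [abs_of_pos (by linarith), abs_of_pos (by linarith)] at h3
    have h4 : L₁ * (1 / K) ≤ L₁ * (y - x) := mul_le_mul_of_nonneg_left (by linarith) hL₁.le
    rw [mul_one_div] at h4
    linarith
  have hhalf : L₁ / (2 * K) + L₁ / (2 * K) = L₁ / K := by field_simp; ring
  have hord : ∀ p q : NodeIdx M n, ω.1 p + 1 / K ≤ ω.1 q →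
      dhat W p.1 p.2 ω < dhat W q.1 q.2 ω := by
    intro p q h
    have h1 := sep _ (hU p) _ (hU q) h
    have h2 := abs_lt.1 (hd p.1 p.2)
    have h3 := abs_lt.1 (hd q.1 q.2)
    have e1 : Upos p.1 p.2 ω = ω.1 p := rfl
    have e2 : Upos q.1 q.2 ω = ω.1 q := rfl
    rw [e1] at h2
    rw [e2] at h3
    linarith [h2.2, h3.1]
  set k := ⌊u * K⌋₊ with hk
  have hk1 : (k:ℝ) ≤ u * K := Nat.floor_le (mul_nonneg hu01.1 hK'.le)
  have hk2 : u * K < k + 1 := Nat.lt_floor_add_one _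
  have hk1' : (k:ℝ) / K ≤ u := by rw [div_le_iff₀ hK']; exact hk1
  have hk2' : u < (k:ℝ) / K + 1 / K := by rw [← add_div, lt_div_iff₀ hK']; exact hk2
  -- upper
  have upper : (rhat W m i ω : ℝ) ≤ N * (u + 3 * (ε / 8)) := by
    by_cases hkK : k + 2 ≤ K
    · have h1 := (abs_lt.1 (hF (k+2) hkK)).2
      have h2 : rhat W m i ω ≤
          (Finset.univ.filter fun p : NodeIdx M n => ω.1 p ≤ ((k+2 : ℕ):ℝ) / K).card := by
        apply Finset.card_le_card
        intro p hp
        simp only [Finset.mem_filter, Finset.mem_univ, true_and] at hp ⊢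
        by_contra hcon
        push Not at hcon
        have := hord ⟨m, i⟩ p (by
          have e : ((k+2 : ℕ):ℝ) / K = (k:ℝ) / K + 1 / K + 1 / K := by push_cast; ring
          have e2 : ω.1 ⟨m, i⟩ = u := rfl
          linarith)
        simp only at this
        linarith
      have h2' : (rhat W m i ω : ℝ) ≤ _ := Nat.cast_le.2 h2
      have e : ((k+2 : ℕ):ℝ) / K = (k:ℝ) / K + 1 / K + 1 / K := by push_cast; ring
      have h3 : N * (((k+2 : ℕ):ℝ) / K) ≤ N * (u + 2 * (ε / 8)) :=
        mul_le_mul_of_nonneg_left (by linarith) hN'.le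
      nlinarith
    · have h2 : rhat W m i ω ≤ Ntot M n := by
        have : Fintype.card (NodeIdx M n) = Ntot M n := by simp [Ntot]
        rw [← this]
        exact Finset.card_le_univ _
      have h2' : (rhat W m i ω : ℝ) ≤ N := Nat.cast_le.2 h2
      have h4 : (K:ℝ) ≤ k + 1 := by exact_mod_cast (by omega : K ≤ k + 1)
      have h5 : 1 ≤ (k:ℝ) / K + 1 / K := by rw [← add_div, le_div_iff₀ hK']; linarith
      have h6 : N * 1 ≤ N * (u + 3 * (ε / 8)) :=
        mul_le_mul_of_nonneg_left (by linarith) hN'.le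
      linarith
  have lower : N * (u - 3 * (ε / 8)) ≤ rhat W m i ω := by
    by_cases hkK : 1 ≤ k
    · have hkleK : k - 1 ≤ K := by
        have : (k:ℝ) ≤ K := hk1.trans (by nlinarith [hu01.2])
        have : k ≤ K := by exact_mod_cast this
        omega
      have h1 := (abs_lt.1 (hF (k-1) hkleK)).1
      have e : ((k-1 : ℕ):ℝ) / K = (k:ℝ) / K - 1 / K := by
        rw [Nat.cast_sub hkK]; push_cast; ring
      have h2 : (Finset.univ.filter fun p : NodeIdx M n => ω.1 p ≤ ((k-1 : ℕ):ℝ) / K).card ≤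
          rhat W m i ω := by
        apply Finset.card_le_card
        intro p hp
        simp only [Finset.mem_filter, Finset.mem_univ, true_and] at hp ⊢
        have := hord p ⟨m, i⟩ (by
          have e2 : ω.1 ⟨m, i⟩ = u := rfl
          linarith)
        exact this.le
      have h2' := (Nat.cast_le (α := ℝ)).2 h2
      have h3 : N * (u - 2 * (ε / 8)) ≤ N * (((k-1 : ℕ):ℝ) / K) :=
        mul_le_mul_of_nonneg_left (by linarith) hN'.le
      nlinarith
    · have h0 : (k:ℝ) = 0 := by exact_mod_cast (by omega : k = 0)
      rw [h0, zero_div, zero_add] at hk2'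
      have : N * (u - 3 * (ε / 8)) ≤ 0 := mul_nonpos_of_nonneg_of_nonpos hN'.le (by linarith)
      exact this.trans (Nat.cast_nonneg _)
  unfold Uhat
  rw [← hNdef]
  have a1 : (rhat W m i ω : ℝ) / N ≤ u + 3 * (ε / 8) := by
    rw [div_le_iff₀ hN']; linarith
  have a2 : u - 3 * (ε / 8) ≤ (rhat W m i ω : ℝ) / N := by
    rw [le_div_iff₀ hN']; linarith
  have a3 : 1 / (2 * N) = (1 / N) / 2 := by field_simp
  have a4 : 0 < 1 / N := by positivity
  rw [a3, abs_lt]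
  constructor <;> linarith

lemma tendsto_aux (c d : ℝ) (hc : 0 < c) :
    Filter.Tendsto (fun k : ℕ => (k:ℝ) * (2 * Real.exp (-(c * (k - d))))) Filter.atTop
      (nhds 0) := by
  have h := (Real.tendsto_pow_mul_exp_neg_atTop_nhds_zero 1)
  have h2 : Filter.Tendsto (fun k : ℕ => c * (k:ℝ)) Filter.atTop Filter.atTop :=
    tendsto_natCast_atTop_atTop.const_mul_atTop hc
  have h3 := (h.comp h2).const_mul (2 * Real.exp (c * d) / c)
  rw [mul_zero] at h3
  refine h3.congr fun k => ?_
  simp only [Function.comp, pow_one]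
  rw [show -(c * ((k:ℝ) - d)) = c * d + -(c * k) by ring, Real.exp_add]
  field_simp

lemma tendsto_aux2 (c : ℝ) (hc : 0 < c) :
    Filter.Tendsto (fun k : ℕ => (2 * Real.exp (-(c * k)))) Filter.atTop
      (nhds 0) := by
  have h2 : Filter.Tendsto (fun k : ℕ => c * (k:ℝ)) Filter.atTop Filter.atTop :=
    tendsto_natCast_atTop_atTop.const_mul_atTop hc
  have := (Real.tendsto_exp_neg_atTop_nhds_zero.comp h2).const_mul 2
  rw [mul_zero] at this
  exact this

lemma final_bound (W : ℝ → ℝ → ℝ) (hW : Measurable (Function.uncurry W))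
    (hWrange : ∀ u ∈ Set.Icc (0:ℝ) 1, ∀ v ∈ Set.Icc (0:ℝ) 1, W u v ∈ Set.Icc (0:ℝ) 1)
    (L₁ : ℝ) (hL₁ : 0 < L₁)
    (hmono : StrictMonoOn (gdeg W) (Set.Icc (0:ℝ) 1))
    (hlip : ∀ x ∈ Set.Icc (0:ℝ) 1, ∀ y ∈ Set.Icc (0:ℝ) 1,
      L₁ * |x - y| ≤ |gdeg W x - gdeg W y|)
    (ε : ℝ) (K : ℕ) (hK : 0 < K) (hKε : 8 / ε < K) (hε : 0 < ε)
    (hN : 8 / ε < Ntot M n) (hn : ∀ m, 2 ≤ n m) :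
    Pmodel M n {ω | ∃ (m : Fin M) (i : Fin (n m)), ε ≤ |Uhat W m i ω - Upos m i ω|} ≤
      ∑ m, ENNReal.ofReal (n m * (2 * Real.exp (-(2 * (L₁ / (2 * K)) ^ 2 * (n m - 1)))))
      + ∑ k ∈ Finset.range (K + 1),
        ENNReal.ofReal (2 * Real.exp (-(2 * (ε / 8) ^ 2 * Ntot M n))) := by
  set A : Set (Sample M n) := ⋃ m : Fin M, ⋃ i : Fin (n m),
    {ω | L₁ / (2 * K) ≤ |dhat W m i ω - gdeg W (Upos m i ω)|} with hA
  set B : Set (Sample M n) := ⋃ k ∈ Finset.range (K + 1),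
    {ω | ε / 8 * Ntot M n ≤
      |((Finset.univ.filter fun p : NodeIdx M n => ω.1 p ≤ (k:ℝ) / K).card : ℝ)
        - Ntot M n * ((k:ℝ) / K)|} with hB
  have hK' : (0:ℝ) < K := by exact_mod_cast hK
  have hae : ∀ᵐ ω ∂(Pmodel M n), ∀ p, ω.1 p ∈ Set.Icc (0:ℝ) 1 := by
    rw [ae_all_iff]
    intro p
    have mp : MeasurePreserving Prod.fst (Pmodel M n) (Measure.pi fun _ : NodeIdx M n => unif) :=
      measurePreserving_fst
    exact ((measurePreserving_eval (fun _ : NodeIdx M n => unif) p).comp mp).quasiMeasurePreserving.ae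
      unif_ae
  have hsub : Pmodel M n {ω | ∃ (m : Fin M) (i : Fin (n m)), ε ≤ |Uhat W m i ω - Upos m i ω|} ≤
      Pmodel M n (A ∪ B) := by
    apply measure_mono_ae
    filter_upwards [hae] with ω hω
    rintro ⟨m, i, h⟩
    by_contra hcon
    have hcon' : ω ∉ A ∧ ω ∉ B := not_or.1 hcon
    obtain ⟨c1, c2⟩ := hcon'
    simp only [hA, hB, Set.mem_iUnion, Set.mem_ofPred_eq, not_exists, not_le, Finset.mem_range]
      at c1 c2
    exact absurd (determ W L₁ hL₁ hmono hlip ε K hK hKε hε ω hN hω c1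
      (fun k hk => c2 k (by omega)) m i) (not_lt.2 h)
  refine hsub.trans ((measure_union_le _ _).trans (add_le_add ?_ ?_))
  · refine (measure_iUnion_fintype_le _ _).trans (Finset.sum_le_sum fun m _ => ?_)
    refine (measure_iUnion_fintype_le _ _).trans ?_
    refine (Finset.sum_le_sum fun i _ =>
      dhat_bound W hW hWrange (L₁ / (2 * K)) (by positivity) m i (hn m)).trans ?_
    rw [ENNReal.ofReal_mul (Nat.cast_nonneg _)]
    simp
  · refine (measure_biUnion_finset_le _ _).trans (Finset.sum_le_sum fun k hk => ?_)
    refine cdf_bound _ ⟨by positivity, ?_⟩ _ (by positivity)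
    rw [div_le_one hK']
    exact_mod_cast Nat.lt_succ_iff.1 (Finset.mem_range.1 hk)

/-- **Corollary (ii) (Uniform consistency when all graph sizes diverge).**
Fix the number of graphs `M` and consider a sequence (indexed by `t`) of collections of
graphs sampled from the same graphon `W`, whose normalized degree function `g` is
strictly increasing and satisfies `L₁|x-y| ≤ |g(x)-g(y)|` on `[0,1]`. If
`n_t^{(m)} → ∞` for every `m ∈ ⟦M⟧`, then
`max_{m ∈ ⟦M⟧} max_{i ∈ ⟦n^{(m)}⟧} |Û^{JGS}_{i,(m)} - U_{i,(m)}| → 0` in probability,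
i.e. for every `ε > 0` the probability that some node of some graph has latent position
error at least `ε` tends to `0`. -/
theorem jgs_latent_uniform_consistency_all_graphs
    (M : ℕ) (W : ℝ → ℝ → ℝ)
    (hWmeas : Measurable (Function.uncurry W))
    (hWsym : ∀ u v, W u v = W v u)
    (hWrange : ∀ u ∈ Set.Icc (0:ℝ) 1, ∀ v ∈ Set.Icc (0:ℝ) 1, W u v ∈ Set.Icc (0:ℝ) 1)
    (L₁ : ℝ) (hL₁ : 0 < L₁)
    (hmono : StrictMonoOn (gdeg W) (Set.Icc (0:ℝ) 1))
    (hlip : ∀ x ∈ Set.Icc (0:ℝ) 1, ∀ y ∈ Set.Icc (0:ℝ) 1,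
      L₁ * |x - y| ≤ |gdeg W x - gdeg W y|)
    (n : ℕ → Fin M → ℕ)
    (hgrow : ∀ m : Fin M, Filter.Tendsto (fun t => n t m) Filter.atTop Filter.atTop) :
    ∀ ε > (0:ℝ),
      Filter.Tendsto
        (fun t => Pmodel M (n t)
          {ω | ∃ (m : Fin M) (i : Fin (n t m)), ε ≤ |Uhat W m i ω - Upos m i ω|})
        Filter.atTop (nhds 0) := by
  intro ε hε
  rcases Nat.eq_zero_or_pos M with h0 | hM
  · subst h0
    refine tendsto_const_nhds.congr fun t => ?_
    have : {ω : Sample 0 (n t) | ∃ (m : Fin 0) (i : Fin (n t m)),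
        ε ≤ |Uhat W m i ω - Upos m i ω|} = ∅ := by
      ext ω
      simp only [Set.mem_ofPred_eq, Set.mem_empty_iff_false, iff_false]
      rintro ⟨m, -⟩
      exact m.elim0
    rw [this, measure_empty]
  obtain ⟨K, hKε⟩ := exists_nat_gt (8 / ε)
  have hK' : (0:ℝ) < K := lt_trans (by positivity) hKε
  have hK : 0 < K := by exact_mod_cast hK'
  have hNt : Filter.Tendsto (fun t => Ntot M (n t)) Filter.atTop Filter.atTop := by
    refine Filter.tendsto_atTop_mono (fun t => ?_) (hgrow ⟨0, hM⟩)
    exact Finset.single_le_sum (f := fun m => n t m) (fun _ _ => Nat.zero_le _)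
      (Finset.mem_univ _)
  have hNt' : Filter.Tendsto (fun t => (Ntot M (n t) : ℝ)) Filter.atTop Filter.atTop :=
    tendsto_natCast_atTop_atTop.comp hNt
  have hlim : Filter.Tendsto (fun t =>
      ∑ m, ENNReal.ofReal (n t m * (2 * Real.exp (-(2 * (L₁ / (2 * K)) ^ 2 * (n t m - 1)))))
      + ∑ k ∈ Finset.range (K + 1),
        ENNReal.ofReal (2 * Real.exp (-(2 * (ε / 8) ^ 2 * Ntot M (n t)))))
      Filter.atTop (nhds 0) := by
    have e : (0:ENNReal) = ∑ m : Fin M, ENNReal.ofReal 0 +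
      ∑ k ∈ Finset.range (K + 1), ENNReal.ofReal 0 := by simp
    rw [e]
    refine Filter.Tendsto.add (tendsto_finsetSum _ fun m _ => ?_)
      (tendsto_finsetSum _ fun k _ => ?_)
    · exact ENNReal.tendsto_ofReal
        ((tendsto_aux (2 * (L₁ / (2 * K)) ^ 2) 1 (by positivity)).comp (hgrow m))
    · exact ENNReal.tendsto_ofReal
        ((tendsto_aux2 (2 * (ε / 8) ^ 2) (by positivity)).comp hNt)
  refine tendsto_of_tendsto_of_tendsto_of_le_of_le' tendsto_const_nhds hlim
    (Filter.Eventually.of_forall fun _ => zero_le) ?_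
  filter_upwards [hNt'.eventually_gt_atTop (8 / ε),
    Filter.eventually_all.2 fun m => (hgrow m).eventually_ge_atTop 2] with t h1 h2
  exact final_bound W hWmeas hWrange L₁ hL₁ hmono hlip ε K hK hKε hε h1 h2

end
end
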